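/- Let n ≥ 2 be an integer and k ∈ ℂ. Define G = −20 + 19k − 6k^2 + 46n − 36kn + 4k^2 n − 32n^2 + 4k^2 n^2 − 16n^3 + 16kn^3 + 16n^4, H = 22 − 22k − 44n − 15kn + 10k^2 n + 30n^2 − 50kn^2 + 30k^2 n^2 − 60n^3 + 40kn^3 + 20k^2 n^3 − 40n^4 + 80kn^4 + 80n^5, and F = 56 − 66k − 2k^2 + 12k^3 − 500n + 1080kn − 941k^2 n + 348k^3 n − 36k^4 n + 760n^2 − 792kn^2 − 322k^2 n^2 + 514k^3 n^2 − 100k^4 n^2 + 1476n^3 − 4024kn^3 + 2948k^2 n^3 − 480k^3 n^3 − 40k^4 n^3 − 3656n^4 + 3672kn^4 + 240k^2 n^4 − 600k^3 n^4 + 40k^4 n^4 + 496n^5 + 3008kn^5 − 2256k^2 n^5 + 192k^3 n^5 + 16k^4 n^5 + 2816n^6 − 3104kn^6 + 192k^2 n^6 + 128k^3 n^6 − 1344n^7 − 256kn^7 + 384k^2 n^7 − 384n^8 + 512kn^8 + 256n^9. Assume k+2n−1 ≠ 0, −1+k+kn+2n^2 ≠ 0, 1−4n+2kn+4n^2 ≠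 0, G ≠ 0, and H ≠ 0. Set c = −n(−3+2k+2kn+4n^2)(k−2n+2kn+4n^2)/(k+2n−1) and λ = −(k+2n−1)·F / (7(1+2n)(−1+k+kn+2n^2)(1−4n+2kn+4n^2)·G·H). Then p_n(c,λ) = 0, i.e. f(c,n) + λ·g(c,n) + λ^2·h(c,n) = 0. -/

import Mathlib

/-- The polynomial `f(c,n)` from the type-C truncation polynomial. -/
noncomputable def fC (c n : ℂ) : ℂ :=
  -204 * c ^ 2 - 192 * c ^ 3 + 171 * c ^ 4 + 952 * c * n - 4612 * c ^ 2 * n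
    + 2348 * c ^ 3 * n - 38 * c ^ 4 * n + 1568 * n ^ 2 - 7708 * c * n ^ 2
    + 1788 * c ^ 2 * n ^ 2 + 2401 * c ^ 3 * n ^ 2 - 74 * c ^ 4 * n ^ 2
    + 560 * n ^ 3 - 18936 * c * n ^ 3 + 22280 * c ^ 2 * n ^ 3
    - 2112 * c ^ 3 * n ^ 3 + 8 * c ^ 4 * n ^ 3 - 16304 * n ^ 4
    + 18640 * c * n ^ 4 + 3420 * c ^ 2 * n ^ 4 - 364 * c ^ 3 * n ^ 4
    + 8 * c ^ 4 * n ^ 4 - 17408 * n ^ 5 + 27680 * c * n ^ 5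
    - 10576 * c ^ 2 * n ^ 5 + 304 * c ^ 3 * n ^ 5 - 3264 * n ^ 6
    - 3072 * c * n ^ 6 + 2736 * c ^ 2 * n ^ 6

/-- The polynomial `g(c,n)` from the type-C truncation polynomial. -/
noncomputable def gC (c n : ℂ) : ℂ :=
  -14 * (c - 1) * (2 * c - 1) * (22 + 5 * c) * (n - 2) * (n - 1)
    * (3 * c + 10 * n + 2 * c * n + 12 * n ^ 2)
    * (5 * c + 28 * n + 2 * c * n + 40 * n ^ 2)

/-- The polynomial `h(c,n)` from the type-C truncation polynomial. -/
noncomputable def hC (c n : ℂ) : ℂ :=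
  49 * (c - 1) ^ 2 * (22 + 5 * c) ^ 2
    * (21 * c ^ 2 + 70 * c * n - 14 * c ^ 2 * n + 200 * n ^ 2 - 135 * c * n ^ 2
      - 26 * c ^ 2 * n ^ 2 + 380 * n ^ 3 - 176 * c * n ^ 3 + 8 * c ^ 2 * n ^ 3
      + 436 * n ^ 4 + 132 * c * n ^ 4 + 8 * c ^ 2 * n ^ 4 + 448 * n ^ 5
      + 112 * c * n ^ 5 + 336 * n ^ 6)

/-- The type-C truncation polynomial `p_n(c,λ) = f(c,n) + λ·g(c,n) + λ²·h(c,n)`. -/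
noncomputable def pC (n c lam : ℂ) : ℂ := fC c n + lam * gC c n + lam ^ 2 * hC c n

/-!
In the shifted level `ψ = k + 2n - 1` the central charge `c` is a rational function of degree two,
invariant under `ψ ↦ ψ' = (2n - 1) / (2 (n + 1) ψ)`, so the quadratic `p_n(c, ·)` must have the two
roots `λ(ψ)` and `λ(ψ')`. In terms of `μ = 7 (c - 1) (22 + 5c) λ` the root at `ψ` is `-F / (ψ G)`,
and `p_n` splits along `c = c(ψ)` as `ψ⁴ p_n = (ψ G μ + F) (ψ G' μ + F')`, where `F'` and `G'` are
`F` and `G` at `ψ'`, cleared of denominators.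
-/

/-- The cofactor `q` in `g = -14 (c - 1) (22 + 5c) q`. Together with `hCofactor` it turns `p_n` into
the quadratic `f - 2 q μ + r μ²` in the rescaled variable `μ = 7 (c - 1) (22 + 5c) λ`. -/
noncomputable def gCofactor (c n : ℂ) : ℂ :=
  (2 * c - 1) * (n - 2) * (n - 1) * (3 * c + 10 * n + 2 * c * n + 12 * n ^ 2)
    * (5 * c + 28 * n + 2 * c * n + 40 * n ^ 2)

/-- The cofactor `r` in `h = 49 (c - 1)² (22 + 5c)² r`. -/
noncomputable def hCofactor (c n : ℂ) : ℂ :=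
  21 * c ^ 2 + 70 * c * n - 14 * c ^ 2 * n + 200 * n ^ 2 - 135 * c * n ^ 2
    - 26 * c ^ 2 * n ^ 2 + 380 * n ^ 3 - 176 * c * n ^ 3 + 8 * c ^ 2 * n ^ 3
    + 436 * n ^ 4 + 132 * c * n ^ 4 + 8 * c ^ 2 * n ^ 4 + 448 * n ^ 5
    + 112 * c * n ^ 5 + 336 * n ^ 6

/-- The central charge `c` of `W^k(so_{2n+1}, f_prin)`, as a function of the shifted level
`ψ = k + h^∨ = k + 2n - 1`. -/
noncomputable def typeBCharge (n ψ : ℂ) : ℂ :=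
  -n * (2 * (n + 1) * ψ - (2 * n + 1)) * ((2 * n + 1) * ψ - (2 * n - 1)) / ψ

/-- The polynomial `G` of the type-B parametrization, in the shifted level `ψ = k + 2n - 1`. -/
noncomputable def typeBG (n ψ : ℂ) : ℂ :=
  (4 * n ^ 2 - 7) - (8 * n ^ 2 + 4 * n - 7) * ψ + 2 * (2 * n ^ 2 + 2 * n - 3) * ψ ^ 2

/-- The polynomial `H` of the type-B parametrization, in the shifted level `ψ = k + 2n - 1`. -/
noncomputable def typeBH (n ψ : ℂ) : ℂ :=
  5 * n * (2 * n + 1) * (2 * n - 1) - (40 * n ^ 3 + 30 * n ^ 2 - 5 * n + 22) * ψ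
    + 10 * n * (n + 1) * (2 * n + 1) * ψ ^ 2

/-- The polynomial `F` of the type-B parametrization, in the shifted level `ψ = k + 2n - 1`. -/
noncomputable def typeBF (n ψ : ℂ) : ℂ :=
  n * (2 * n + 1) * (2 * n - 1) * (4 * n ^ 2 - 19)
    - 2 * (32 * n ^ 5 + 20 * n ^ 4 - 120 * n ^ 3 - 151 * n ^ 2 + 19 * n + 17) * ψ
    + (n - 2) * (96 * n ^ 4 + 312 * n ^ 3 + 344 * n ^ 2 + 84 * n - 17) * ψ ^ 2
    - 2 * (32 * n ^ 5 + 60 * n ^ 4 - 80 * n ^ 3 - 201 * n ^ 2 - 102 * n - 6) * ψ ^ 3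
    + 4 * n * (n + 1) * (2 * n + 1) * (2 * n ^ 2 + 2 * n - 9) * ψ ^ 4

/-- The conjugate of `typeBG` under `ψ ↦ ψ' = (2n - 1) / (2 (n + 1) ψ)`, cleared of denominators:
`2 n² (n + 1)² (2n + 1)² ψ² G(ψ')`. -/
noncomputable def typeBGConj (n ψ : ℂ) : ℂ :=
  n ^ 2 * (2 * n + 1) ^ 2
    * ((2 * n - 1) ^ 2 * (2 * n ^ 2 + 2 * n - 3)
      - (n + 1) * (2 * n - 1) * (8 * n ^ 2 + 4 * n - 7) * ψ
      + 2 * (n + 1) ^ 2 * (4 * n ^ 2 - 7) * ψ ^ 2)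

/-- The conjugate of `typeBF` under `ψ ↦ ψ' = (2n - 1) / (2 (n + 1) ψ)`, cleared of denominators:
`4 n² (n + 1)³ (2n + 1)² (2n - 1)⁻¹ ψ⁴ F(ψ')`. -/
noncomputable def typeBFConj (n ψ : ℂ) : ℂ :=
  n ^ 2 * (2 * n + 1) ^ 2
    * (n * (2 * n + 1) * (2 * n - 1) ^ 3 * (2 * n ^ 2 + 2 * n - 9)
      - (2 * n - 1) ^ 2
        * (32 * n ^ 5 + 60 * n ^ 4 - 80 * n ^ 3 - 201 * n ^ 2 - 102 * n - 6) * ψ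
      + (n + 1) * (n - 2) * (2 * n - 1)
        * (96 * n ^ 4 + 312 * n ^ 3 + 344 * n ^ 2 + 84 * n - 17) * ψ ^ 2
      - 4 * (n + 1) ^ 2
        * (32 * n ^ 5 + 20 * n ^ 4 - 120 * n ^ 3 - 151 * n ^ 2 + 19 * n + 17) * ψ ^ 3
      + 4 * n * (n + 1) ^ 3 * (2 * n + 1) * (4 * n ^ 2 - 19) * ψ ^ 4)

/-- The truncation parameter `λ` of the type-B parametrization, as a function of the shifted level
`ψ = k + 2n - 1`. -/
noncomputable def typeBLambda (n ψ : ℂ) : ℂ :=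
  -ψ * typeBF n ψ
    / (7 * (2 * n + 1) * ((n + 1) * ψ - n) * (2 * n * ψ - (2 * n - 1))
      * typeBG n ψ * typeBH n ψ)

theorem pC_eq_quadratic (n c lam : ℂ) :
    pC n c lam = fC c n - 2 * gCofactor c n * (7 * (c - 1) * (22 + 5 * c) * lam)
      + hCofactor c n * (7 * (c - 1) * (22 + 5 * c) * lam) ^ 2 := by
  rw [pC, gC, hC, gCofactor, hCofactor]
  ring

section ShiftedLevel

variable {n ψ : ℂ}

theorem typeBCharge_sub_one (hψ : ψ ≠ 0) :
    typeBCharge n ψ - 1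
      = -((2 * n + 1) * ((n + 1) * ψ - n) * (2 * n * ψ - (2 * n - 1))) / ψ := by
  rw [typeBCharge]
  field_simp
  ring

theorem add_five_mul_typeBCharge (hψ : ψ ≠ 0) :
    22 + 5 * typeBCharge n ψ = -typeBH n ψ / ψ := by
  rw [typeBCharge, typeBH]
  field_simp
  ring

theorem pow_four_mul_fC_typeBCharge (hψ : ψ ≠ 0) :
    ψ ^ 4 * fC (typeBCharge n ψ) n = typeBF n ψ * typeBFConj n ψ := by
  rw [typeBCharge, fC, typeBF, typeBFConj]
  field_simp
  ring

theorem pow_two_mul_hCofactor_typeBCharge (hψ : ψ ≠ 0) :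
    ψ ^ 2 * hCofactor (typeBCharge n ψ) n = typeBG n ψ * typeBGConj n ψ := by
  rw [typeBCharge, hCofactor, typeBG, typeBGConj]
  field_simp
  ring

theorem two_mul_pow_three_mul_gCofactor_typeBCharge (hψ : ψ ≠ 0) :
    2 * ψ ^ 3 * gCofactor (typeBCharge n ψ) n
      = -(typeBF n ψ * typeBGConj n ψ + typeBG n ψ * typeBFConj n ψ) := by
  rw [typeBCharge, gCofactor, typeBF, typeBFConj, typeBG, typeBGConj]
  field_simp
  ring

theorem pow_four_mul_quadratic_typeBCharge (hψ : ψ ≠ 0) (μ : ℂ) :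
    ψ ^ 4 * (fC (typeBCharge n ψ) n - 2 * gCofactor (typeBCharge n ψ) n * μ
        + hCofactor (typeBCharge n ψ) n * μ ^ 2)
      = (ψ * typeBG n ψ * μ + typeBF n ψ) * (ψ * typeBGConj n ψ * μ + typeBFConj n ψ) := by
  linear_combination pow_four_mul_fC_typeBCharge (n := n) hψ
    - ψ * μ * two_mul_pow_three_mul_gCofactor_typeBCharge (n := n) hψ
    + ψ ^ 2 * μ ^ 2 * pow_two_mul_hCofactor_typeBCharge (n := n) hψ

theorem mul_typeBG_mul_rescaled_typeBLambda (hψ : ψ ≠ 0) (hn : 2 * n + 1 ≠ 0)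
    (hA : (n + 1) * ψ - n ≠ 0) (hB : 2 * n * ψ - (2 * n - 1) ≠ 0)
    (hG : typeBG n ψ ≠ 0) (hH : typeBH n ψ ≠ 0) :
    ψ * typeBG n ψ
        * (7 * (typeBCharge n ψ - 1) * (22 + 5 * typeBCharge n ψ) * typeBLambda n ψ)
      = -typeBF n ψ := by
  rw [typeBCharge_sub_one hψ, add_five_mul_typeBCharge hψ, typeBLambda]
  generalize (n + 1) * ψ - n = A at hA ⊢
  generalize 2 * n * ψ - (2 * n - 1) = B at hB ⊢
  field_simp

theorem typeB_parametrization_on_curve_general (hψ : ψ ≠ 0) (hn : 2 * n + 1 ≠ 0)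
    (hA : (n + 1) * ψ - n ≠ 0) (hB : 2 * n * ψ - (2 * n - 1) ≠ 0)
    (hG : typeBG n ψ ≠ 0) (hH : typeBH n ψ ≠ 0) :
    pC n (typeBCharge n ψ) (typeBLambda n ψ) = 0 := by
  rw [pC_eq_quadratic]
  refine (mul_eq_zero.mp ?_).resolve_left (pow_ne_zero 4 hψ)
  rw [pow_four_mul_quadratic_typeBCharge hψ,
    mul_typeBG_mul_rescaled_typeBLambda hψ hn hA hB hG hH, neg_add_cancel, zero_mul]

end ShiftedLevel

/-- The rational parametrization of the truncation curve `V(I_n)` by the level `k`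
of the type-B principal W-algebra `W^k(so_{2n+1}, f_prin)` lies on `{p_n = 0}`. -/
theorem typeB_parametrization_on_curve (n : ℤ) (hn : 2 ≤ n) (k : ℂ)
    (nn : ℂ) (hnn : nn = (n : ℂ))
    (G H F c lam : ℂ)
    (hG : G = -20 + 19 * k - 6 * k ^ 2 + 46 * nn - 36 * k * nn + 4 * k ^ 2 * nn
      - 32 * nn ^ 2 + 4 * k ^ 2 * nn ^ 2 - 16 * nn ^ 3 + 16 * k * nn ^ 3 + 16 * nn ^ 4)
    (hH : H = 22 - 22 * k - 44 * nn - 15 * k * nn + 10 * k ^ 2 * nn + 30 * nn ^ 2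
      - 50 * k * nn ^ 2 + 30 * k ^ 2 * nn ^ 2 - 60 * nn ^ 3 + 40 * k * nn ^ 3
      + 20 * k ^ 2 * nn ^ 3 - 40 * nn ^ 4 + 80 * k * nn ^ 4 + 80 * nn ^ 5)
    (hF : F = 56 - 66 * k - 2 * k ^ 2 + 12 * k ^ 3 - 500 * nn + 1080 * k * nn
      - 941 * k ^ 2 * nn + 348 * k ^ 3 * nn - 36 * k ^ 4 * nn + 760 * nn ^ 2
      - 792 * k * nn ^ 2 - 322 * k ^ 2 * nn ^ 2 + 514 * k ^ 3 * nn ^ 2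
      - 100 * k ^ 4 * nn ^ 2 + 1476 * nn ^ 3 - 4024 * k * nn ^ 3
      + 2948 * k ^ 2 * nn ^ 3 - 480 * k ^ 3 * nn ^ 3 - 40 * k ^ 4 * nn ^ 3
      - 3656 * nn ^ 4 + 3672 * k * nn ^ 4 + 240 * k ^ 2 * nn ^ 4
      - 600 * k ^ 3 * nn ^ 4 + 40 * k ^ 4 * nn ^ 4 + 496 * nn ^ 5
      + 3008 * k * nn ^ 5 - 2256 * k ^ 2 * nn ^ 5 + 192 * k ^ 3 * nn ^ 5
      + 16 * k ^ 4 * nn ^ 5 + 2816 * nn ^ 6 - 3104 * k * nn ^ 6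
      + 192 * k ^ 2 * nn ^ 6 + 128 * k ^ 3 * nn ^ 6 - 1344 * nn ^ 7
      - 256 * k * nn ^ 7 + 384 * k ^ 2 * nn ^ 7 - 384 * nn ^ 8
      + 512 * k * nn ^ 8 + 256 * nn ^ 9)
    (h1 : k + 2 * nn - 1 ≠ 0)
    (h2 : -1 + k + k * nn + 2 * nn ^ 2 ≠ 0)
    (h3 : 1 - 4 * nn + 2 * k * nn + 4 * nn ^ 2 ≠ 0)
    (hGne : G ≠ 0) (hHne : H ≠ 0)
    (hc : c = -nn * (-3 + 2 * k + 2 * k * nn + 4 * nn ^ 2)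
        * (k - 2 * nn + 2 * k * nn + 4 * nn ^ 2) / (k + 2 * nn - 1))
    (hlam : lam = -(k + 2 * nn - 1) * F
        / (7 * (1 + 2 * nn) * (-1 + k + k * nn + 2 * nn ^ 2)
            * (1 - 4 * nn + 2 * k * nn + 4 * nn ^ 2) * G * H)) :
    pC nn c lam = 0 := by
  have hn_odd : 2 * nn + 1 ≠ 0 := by
    rw [hnn]
    exact_mod_cast (by omega : 2 * n + 1 ≠ 0)
  have hA : (nn + 1) * (k + 2 * nn - 1) - nn = -1 + k + k * nn + 2 * nn ^ 2 := by ring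
  have hB : 2 * nn * (k + 2 * nn - 1) - (2 * nn - 1)
      = 1 - 4 * nn + 2 * k * nn + 4 * nn ^ 2 := by ring
  have hG_shift : G = typeBG nn (k + 2 * nn - 1) := by rw [hG, typeBG]; ring
  have hH_shift : H = typeBH nn (k + 2 * nn - 1) := by rw [hH, typeBH]; ring
  have hF_shift : F = typeBF nn (k + 2 * nn - 1) := by rw [hF, typeBF]; ring
  have hc_shift : c = typeBCharge nn (k + 2 * nn - 1) := by rw [hc, typeBCharge]; ring
  have hlam_shift : lam = typeBLambda nn (k + 2 * nn - 1) := by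
    rw [hlam, typeBLambda, hA, hB, ← hG_shift, ← hH_shift, ← hF_shift, add_comm 1 (2 * nn)]
  rw [hc_shift, hlam_shift]
  exact typeB_parametrization_on_curve_general h1 hn_odd (hA ▸ h2) (hB ▸ h3)
    (hG_shift ▸ hGne) (hH_shift ▸ hHne)
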